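/- (Proposition 2.1) Let γ ≥ 3 and let the initial data (τ₀,u₀) satisfy Assumption A. If there exists a point x* ∈ ℝ such that s_x(x*,0) < 0 or r_x(x*,0) < 0, then the classical solution of the Cauchy problem for the p-system breaks down in finite time: there is no C¹ solution of the p-system on all of ℝ × [0,∞) with initial data (τ₀,u₀). -/

import Mathlib

open Real Set MeasureTheory Filter

/-- `η(τ) = (2√(K₁γ)/(γ−1)) τ^{−(γ−1)/2}`. -/
noncomputable def etaP (K₁ γ τv : ℝ) : ℝ :=
  2 * Real.sqrt (K₁ * γ) / (γ - 1) * τv ^ (-(γ - 1) / 2)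

/-- Lagrangian sound speed `c(τ) = √(K₁γ) τ^{−(γ+1)/2}`. -/
noncomputable def soundP (K₁ γ τv : ℝ) : ℝ :=
  Real.sqrt (K₁ * γ) * τv ^ (-(γ + 1) / 2)

/-- `K_τ = (2√(K₁γ)/(γ−1))^{2/(γ−1)}`. -/
noncomputable def KtauP (K₁ γ : ℝ) : ℝ :=
  (2 * Real.sqrt (K₁ * γ) / (γ - 1)) ^ (2 / (γ - 1))

/-- `K_c = √(K₁γ) K_τ^{−(γ+1)/2}`. -/
noncomputable def KcP (K₁ γ : ℝ) : ℝ :=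
  Real.sqrt (K₁ * γ) * KtauP K₁ γ ^ (-(γ + 1) / 2)

/-- A `Cᵏ` solution `(τ, u)` of the p-system with `γ`-law pressure `p = K₁ τ^{−γ}`
on `ℝ × I`:  `τ > 0`, both components are `Cᵏ`, and the equations
`τ_t − u_x = 0`, `u_t + (p(τ))_x = 0` hold pointwise. -/
def PSysSol (K₁ γ : ℝ) (I : Set ℝ) (k : ℕ) (τ u : ℝ → ℝ → ℝ) : Prop :=
  (∀ x t, t ∈ I → 0 < τ x t) ∧
  ContDiffOn ℝ k (fun p : ℝ × ℝ => τ p.1 p.2) (Set.univ ×ˢ I) ∧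
  ContDiffOn ℝ k (fun p : ℝ × ℝ => u p.1 p.2) (Set.univ ×ˢ I) ∧
  (∀ x : ℝ, ∀ t ∈ I, deriv (fun t' => τ x t') t - deriv (fun x' => u x' t) x = 0) ∧
  (∀ x : ℝ, ∀ t ∈ I, deriv (fun t' => u x t') t + deriv (fun x' => K₁ * τ x' t ^ (-γ)) x = 0)

/-- Assumption A: `τ₀, u₀` are `C¹` with `‖τ₀‖_{C¹} + ‖u₀‖_{C¹} ≤ M₁` and `τ₀ ≥ M₂ > 0`. -/
def AssumptionA (M₁ M₂ : ℝ) (τ₀ u₀ : ℝ → ℝ) : Prop :=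
  ContDiff ℝ 1 τ₀ ∧ ContDiff ℝ 1 u₀ ∧ 0 < M₁ ∧ 0 < M₂ ∧
  (∀ x, |τ₀ x| + |deriv τ₀ x| + |u₀ x| + |deriv u₀ x| ≤ M₁) ∧
  (∀ x, M₂ ≤ τ₀ x)

/-!
The Riemann invariants solve the diagonal system `s_t + c s_x = 0`, `r_t - c r_x = 0`, where
`c = κ(s - r)` and `κ(w)` is a multiple of `w ^ ((γ + 1) / (γ - 1))`. Along a forward
characteristic, `y = √c s_x` satisfies `y' = -(κ' / √κ) y²`. For `γ ≥ 3` the exponent of `κ` is at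
most `2`, so `κ' / √κ` is bounded below as long as `s - r` is bounded above, and a negative `y`
reaches `-∞` in finite time. The bounds `s ≤ sup s₀` and `r ≥ inf r₀` along the characteristic come
from following backwards the characteristics that end on it. The reflection `x ↦ -x`,
`(s, r) ↦ (-r, -s)` exchanges the two families and reduces `r_x < 0` to `s_x < 0`.
-/

open scoped NNReal Topology

/-! ### Real analysis -/

section RealAnalysis

variable {a b t₀ N : ℝ} {f g : ℝ → ℝ}

theorem eq_of_hasDerivAt_zero (hab : a ≤ b) (hf : ContinuousOn f (Icc a b))
    (hf' : ∀ t ∈ Ioo a b, HasDerivAt f 0 t) : f b = f a := by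
  rcases hab.eq_or_lt with rfl | hlt
  · rfl
  obtain ⟨t, -, ht⟩ := exists_hasDerivAt_eq_slope f 0 hlt hf hf'
  rw [Pi.zero_apply, eq_comm, div_eq_zero_iff] at ht
  exact sub_eq_zero.1 (ht.resolve_right (sub_pos.2 hlt).ne')

theorem forall_lt_of_forall_uIcc_le (hg : ContinuousOn g (Icc a b)) (ht₀ : t₀ ∈ Icc a b)
    (h₀ : g t₀ < N) (hstep : ∀ t ∈ Icc a b, (∀ t' ∈ uIcc t₀ t, g t' ≤ N) → g t < N) :
    ∀ t ∈ Icc a b, g t < N := by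
  have exists_eq : ∀ t ∈ Icc a b, N ≤ g t → ∃ t' ∈ uIcc t₀ t, g t' = N := fun t ht hNt =>
    intermediate_value_uIcc (hg.mono (ordConnected_Icc.uIcc_subset ht₀ ht))
      (uIcc_of_le (h₀.le.trans hNt) ▸ ⟨h₀.le, hNt⟩)
  -- Otherwise there is a point `t₁` closest to `t₀` among those where `g = N`.
  by_contra! ⟨t, ht, hNt⟩
  obtain ⟨t', ht', ht'N⟩ := exists_eq t ht hNt
  have hcompact : IsCompact (Icc a b ∩ g ⁻¹' {N}) :=
    isCompact_Icc.of_isClosed_subset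
      (hg.preimage_isClosed_of_isClosed isClosed_Icc isClosed_singleton) inter_subset_left
  obtain ⟨t₁, ⟨ht₁, ht₁N : g t₁ = N⟩, hmin⟩ := hcompact.exists_isMinOn
    ⟨t', ordConnected_Icc.uIcc_subset ht₀ ht ht', ht'N⟩ (f := fun t => |t - t₀|) (by fun_prop)
  refine (hstep t₁ ht₁ fun s hs => ?_).ne ht₁N
  by_contra! hlt
  have hsI := ordConnected_Icc.uIcc_subset ht₀ ht₁ hs
  obtain ⟨s', hs', hs'N⟩ := exists_eq s hsI hlt.le
  have hle : |t₁ - t₀| ≤ |s' - t₀| := hmin ⟨ordConnected_Icc.uIcc_subset ht₀ hsI hs', hs'N⟩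
  have hs't₁ : s' = t₁ := by grind [mem_uIcc]
  have hst₁ : s = t₁ := by grind [mem_uIcc]
  exact hlt.ne' (hst₁ ▸ ht₁N)

theorem mul_lt_one_of_riccati {y y' : ℝ → ℝ} {k T : ℝ} (hk : 0 ≤ k) (hT : 0 ≤ T)
    (hy : ContinuousOn y (Icc 0 T)) (hy' : ∀ t ∈ Ioo 0 T, HasDerivAt y (y' t) t)
    (hle : ∀ t ∈ Ioo 0 T, y' t ≤ -k * y t ^ 2) (h₀ : y 0 < 0) : k * -y 0 * T < 1 := by
  have hint : interior (Icc 0 T) ⊆ Ioo 0 T := interior_Icc.subset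
  have hanti : AntitoneOn y (Icc 0 T) :=
    antitoneOn_of_hasDerivWithinAt_nonpos (convex_Icc 0 T) hy
      (fun t ht => (hy' t (hint ht)).hasDerivWithinAt)
      (fun t ht => (hle t (hint ht)).trans (by nlinarith [sq_nonneg (y t)]))
  have hneg : ∀ t ∈ Icc 0 T, y t < 0 := fun t ht =>
    (hanti (left_mem_Icc.2 hT) ht ht.1).trans_lt h₀
  -- `1 / y` increases at rate at least `k` but has to remain negative.
  have hinv' : ∀ t ∈ Ioo 0 T, HasDerivAt (fun t => (y t)⁻¹) (-y' t / y t ^ 2) t := fun t ht =>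
    (hy' t ht).fun_inv (hneg t (Ioo_subset_Icc_self ht)).ne
  have hgrowth : k * (T - 0) ≤ (y T)⁻¹ - (y 0)⁻¹ := by
    refine (convex_Icc 0 T).mul_sub_le_image_sub_of_le_deriv
      (hy.inv₀ fun t ht => (hneg t ht).ne) (fun t ht => ?_) (fun t ht => ?_)
      0 (left_mem_Icc.2 hT) T (right_mem_Icc.2 hT) hT
    · exact (hinv' t (hint ht)).differentiableAt.differentiableWithinAt
    · have hyt : y t < 0 := hneg t (interior_subset ht)
      rw [show deriv y⁻¹ t = _ from (hinv' t (hint ht)).deriv, le_div_iff₀ (sq_pos_of_neg hyt)]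
      linarith [hle t (hint ht)]
  have hT' : (y T)⁻¹ < 0 := inv_lt_zero.2 (hneg T (right_mem_Icc.2 hT))
  calc k * -y 0 * T = k * (T - 0) * -y 0 := by ring
    _ < -(y 0)⁻¹ * -y 0 := by gcongr <;> linarith
    _ = 1 := by field_simp [h₀.ne]

end RealAnalysis

/-! ### Integral curves of planar velocity fields -/

section IntegralCurves

variable {a b t₀ : ℝ}

theorem exists_isIntegralCurveOn_of_lipschitzWith_of_norm_le {E : Type*} [NormedAddCommGroup E]
    [NormedSpace ℝ E] [CompleteSpace E] {v : ℝ → E → E} {K L : ℝ≥0}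
    (hlip : ∀ t ∈ Icc a b, LipschitzWith K (v t)) (hcont : ∀ x, ContinuousOn (v · x) (Icc a b))
    (hL : ∀ t ∈ Icc a b, ∀ x, ‖v t x‖ ≤ L) (ht₀ : t₀ ∈ Icc a b) (x₀ : E) :
    ∃ X : ℝ → E, X t₀ = x₀ ∧ IsIntegralCurveOn X v (Icc a b) :=
  IsPicardLindelof.exists_eq_forall_mem_Icc_hasDerivWithinAt₀
    (t₀ := ⟨t₀, ht₀⟩) (a := L * (b - a).toNNReal) (L := L) (K := K)
    { lipschitzOnWith := fun t ht => (hlip t ht).lipschitzOnWith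
      continuousOn := fun x _ => hcont x
      norm_le := fun t ht x _ => hL t ht x
      mul_max_le := by
        rw [NNReal.coe_mul, coe_toNNReal _ (sub_nonneg.2 (ht₀.1.trans ht₀.2)), NNReal.coe_zero,
          sub_zero]
        gcongr
        exact max_le (by linarith [ht₀.1]) (by linarith [ht₀.2]) }

theorem norm_sub_le_of_isIntegralCurveOn {E : Type*} [NormedAddCommGroup E] [NormedSpace ℝ E]
    {v : ℝ → E → E} {X : ℝ → E} {t C : ℝ} (hX : IsIntegralCurveOn X v (uIcc t₀ t))
    (hC : ∀ t' ∈ uIcc t₀ t, ‖v t' (X t')‖ ≤ C) : ‖X t - X t₀‖ ≤ C * |t - t₀| :=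
  (convex_uIcc t₀ t).norm_image_sub_le_of_norm_hasDerivWithin_le hX hC left_mem_uIcc right_mem_uIcc

variable {c : ℝ × ℝ → ℝ} {l u : ℝ}

theorem exists_lipschitzOnWith_slice (hc : ContDiffOn ℝ 1 c (univ ×ˢ Icc a b)) (l u : ℝ) :
    ∃ K, ∀ t ∈ Icc a b, LipschitzOnWith K (fun x => c (x, t)) (Icc l u) := by
  obtain ⟨K, hK⟩ := (hc.mono (prod_mono_left (subset_univ (Icc l u)))).exists_lipschitzOnWith
    one_ne_zero ((convex_Icc l u).prod (convex_Icc a b)) (isCompact_Icc.prod isCompact_Icc)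
  refine ⟨K * 1, fun t ht => hK.comp (LipschitzWith.prodMk_right t).lipschitzOnWith ?_⟩
  exact fun x hx => ⟨hx, ht⟩

theorem exists_isIntegralCurveOn_projIcc (hc : ContDiffOn ℝ 1 c (univ ×ˢ Icc a b)) (hlu : l ≤ u)
    (ht₀ : t₀ ∈ Icc a b) (x₀ : ℝ) :
    ∃ X : ℝ → ℝ, X t₀ = x₀ ∧
      IsIntegralCurveOn X (fun t x => c (projIcc l u hlu x, t)) (Icc a b) := by
  obtain ⟨K, hK⟩ := exists_lipschitzOnWith_slice hc l u
  obtain ⟨L, hL⟩ := (isCompact_Icc.prod isCompact_Icc).exists_bound_of_continuousOn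
    (hc.continuousOn.mono (prod_mono_left (subset_univ (Icc l u))))
  have hL₀ : 0 ≤ L := (norm_nonneg _).trans (hL (l, t₀) ⟨left_mem_Icc.2 hlu, ht₀⟩)
  refine exists_isIntegralCurveOn_of_lipschitzWith_of_norm_le (K := K * 1) (L := ⟨L, hL₀⟩)
    (fun t ht => ?_) (fun x => ?_) (fun t ht x => hL _ ⟨(projIcc l u hlu x).2, ht⟩) ht₀ x₀
  · exact (hK t ht).to_restrict.comp (LipschitzWith.projIcc hlu)
  · exact hc.continuousOn.comp (by fun_prop) fun t ht => ⟨mem_univ _, ht⟩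

theorem exists_isIntegralCurveOn_of_abs_sub_le {x₀ R : ℝ}
    (hc : ContDiffOn ℝ 1 c (univ ×ˢ Icc a b)) (ht₀ : t₀ ∈ Icc a b)
    (hR : ∀ t ∈ Icc a b, ∀ Y : ℝ → ℝ, Y t₀ = x₀ →
      IsIntegralCurveOn Y (fun t x => c (x, t)) (uIcc t₀ t) → |Y t - x₀| ≤ R) :
    ∃ X : ℝ → ℝ, X t₀ = x₀ ∧ IsIntegralCurveOn X (fun t x => c (x, t)) (Icc a b) := by
  -- Clipping the space variable makes the velocity bounded and globally Lipschitz; by the a priori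
  -- bound the clipped curve never leaves the interval on which clipping is the identity.
  have hlu : x₀ - (|R| + 1) ≤ x₀ + (|R| + 1) := by linarith [abs_nonneg R]
  obtain ⟨X, hX₀, hX⟩ := exists_isIntegralCurveOn_projIcc hc hlu ht₀ x₀
  have unclip : ∀ s ⊆ Icc a b, (∀ t ∈ s, |X t - x₀| ≤ |R| + 1) →
      IsIntegralCurveOn X (fun t x => c (x, t)) s := fun s hs hsX t ht => by
    have hmem : X t ∈ Icc (x₀ - (|R| + 1)) (x₀ + (|R| + 1)) := by
      have := abs_le.1 (hsX t ht)
      constructor <;> linarith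
    simpa only [projIcc_of_mem hlu hmem] using (hX t (hs ht)).mono hs
  have hinside : ∀ t ∈ Icc a b, |X t - x₀| < |R| + 1 := by
    refine forall_lt_of_forall_uIcc_le (hX.continuousOn.sub continuousOn_const).abs ht₀
      ?_ fun t ht hle => ?_
    · rw [hX₀, sub_self, abs_zero]
      positivity
    · have hY := unclip _ (ordConnected_Icc.uIcc_subset ht₀ ht) hle
      exact (hR t ht X hX₀ hY).trans_lt ((le_abs_self R).trans_lt (lt_add_one _))
  exact ⟨X, hX₀, unclip _ Subset.rfl fun t ht => (hinside t ht).le⟩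

theorem exists_isIntegralCurveOn_of_abs_velocity_le {x₀ C : ℝ}
    (hc : ContDiffOn ℝ 1 c (univ ×ˢ Icc a b)) (ht₀ : t₀ ∈ Icc a b)
    (hC : ∀ t ∈ Icc a b, ∀ Y : ℝ → ℝ, Y t₀ = x₀ →
      IsIntegralCurveOn Y (fun t x => c (x, t)) (uIcc t₀ t) → |c (Y t, t)| ≤ C) :
    ∃ X : ℝ → ℝ, X t₀ = x₀ ∧ IsIntegralCurveOn X (fun t x => c (x, t)) (Icc a b) := by
  refine exists_isIntegralCurveOn_of_abs_sub_le (R := C * (b - a)) hc ht₀ fun t ht Y hY₀ hY => ?_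
  have hvelocity : ∀ t' ∈ uIcc t₀ t, |c (Y t', t')| ≤ C := fun t' ht' =>
    hC t' (ordConnected_Icc.uIcc_subset ht₀ ht ht') Y hY₀ (hY.mono (uIcc_subset_uIcc_left ht'))
  have hC₀ : 0 ≤ C := (abs_nonneg _).trans (hvelocity t₀ left_mem_uIcc)
  calc |Y t - x₀| ≤ C * |t - t₀| := hY₀ ▸ norm_sub_le_of_isIntegralCurveOn hY hvelocity
    _ ≤ C * (b - a) := by gcongr; exact abs_sub_le_of_le_of_le ht.1 ht.2 ht₀.1 ht₀.2

theorem integralCurve_le_of_le_right {X Y : ℝ → ℝ} (hc : ContDiffOn ℝ 1 c (univ ×ˢ Icc a b))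
    (hX : IsIntegralCurveOn X (fun t x => c (x, t)) (Icc a b))
    (hY : IsIntegralCurveOn Y (fun t x => c (x, t)) (Icc a b)) (hb : X b ≤ Y b) :
    ∀ t ∈ Icc a b, X t ≤ Y t := by
  by_contra! ⟨t, ht, hlt⟩
  obtain ⟨s, hs, hs₀⟩ : (0 : ℝ) ∈ (fun t => Y t - X t) '' Icc t b :=
    intermediate_value_Icc ht.2 ((hY.continuousOn.sub hX.continuousOn).mono
      (Icc_subset_Icc_left ht.1)) ⟨(sub_neg.2 hlt).le, sub_nonneg.2 hb⟩
  obtain ⟨l, u, hlu⟩ : ∃ l u, X '' Icc a b ∪ Y '' Icc a b ⊆ Icc l u :=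
    have hcompact := (isCompact_Icc.image_of_continuousOn hX.continuousOn).union
      (isCompact_Icc.image_of_continuousOn hY.continuousOn)
    bddBelow_bddAbove_iff_subset_Icc.1 ⟨hcompact.bddBelow, hcompact.bddAbove⟩
  obtain ⟨K, hK⟩ := exists_lipschitzOnWith_slice hc l u
  have hmem : ∀ t' ∈ Ioc t s, t' ∈ Ioc a b := fun t' ht' =>
    ⟨ht.1.trans_lt ht'.1, ht'.2.trans hs.2⟩
  have hmem' : ∀ t' ∈ Ioc t s, t' ∈ Icc a b := fun t' ht' => Ioc_subset_Icc_self (hmem t' ht')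
  have hsub : Icc t s ⊆ Icc a b := Icc_subset_Icc ht.1 hs.2
  have hEq : EqOn X Y (Icc t s) := ODE_solution_unique_of_mem_Icc_left
    (fun t' ht' => hK t' (hmem' t' ht')) (hX.continuousOn.mono hsub)
    (fun t' ht' => (hX t' (hmem' t' ht')).mono_of_mem_nhdsWithin
      (Icc_mem_nhdsLE_of_mem (hmem t' ht')))
    (fun t' ht' => hlu (.inl (mem_image_of_mem X (hmem' t' ht')))) (hY.continuousOn.mono hsub)
    (fun t' ht' => (hY t' (hmem' t' ht')).mono_of_mem_nhdsWithin
      (Icc_mem_nhdsLE_of_mem (hmem t' ht')))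
    (fun t' ht' => hlu (.inr (mem_image_of_mem Y (hmem' t' ht')))) (sub_eq_zero.1 hs₀).symm
  exact hlt.ne' (hEq (left_mem_Icc.2 hs.1))

end IntegralCurves

/-! ### Transport equations on the half plane -/

/-- The closed half plane `ℝ × [0, ∞)` of points `(x, t)`. -/
def halfPlane : Set (ℝ × ℝ) := univ ×ˢ Ici 0

/-- The spatial derivative `f_x` at the point `p = (x, t)`. -/
noncomputable def xDeriv (f : ℝ × ℝ → ℝ) (p : ℝ × ℝ) : ℝ := deriv (fun x => f (x, p.2)) p.1

/-- The transport equation `f_t + v f_x = 0` on the open half plane `t > 0`, written as the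
vanishing of the derivative of `f` in the direction `(v, 1)`. It is meant for functions `f` that are
differentiable there, since `fderiv` is `0` at other points. -/
def IsTransported (v f : ℝ × ℝ → ℝ) : Prop :=
  ∀ p : ℝ × ℝ, 0 < p.2 → fderiv ℝ f p (v p, 1) = 0

section Transport

variable {f v : ℝ × ℝ → ℝ} {p : ℝ × ℝ} {X : ℝ → ℝ} {a b t w x : ℝ}

theorem mk_mem_halfPlane (ht : 0 ≤ t) : (x, t) ∈ halfPlane := ⟨mem_univ _, ht⟩

theorem halfPlane_mem_nhds (hp : 0 < p.2) : halfPlane ∈ 𝓝 p :=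
  prod_mem_nhds univ_mem (Ici_mem_nhds hp)

theorem uniqueDiffOn_halfPlane : UniqueDiffOn ℝ halfPlane :=
  uniqueDiffOn_univ.prod (uniqueDiffOn_Ici 0)

theorem hasDerivAt_slice (hf : ContDiffOn ℝ 1 f halfPlane) (hp : p ∈ halfPlane) :
    HasDerivAt (fun x => f (x, p.2)) (fderivWithin ℝ f halfPlane p (1, 0)) p.1 :=
  HasFDerivWithinAt.comp_hasDerivAt (t := halfPlane) (l := f) (f := fun x => (x, p.2)) p.1
    (hf.differentiableOn one_ne_zero p hp).hasFDerivWithinAt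
    ((hasDerivAt_id p.1).prodMk (hasDerivAt_const p.1 p.2))
    (.of_forall fun _ => mk_mem_halfPlane hp.2)

theorem xDeriv_eq_fderivWithin (hf : ContDiffOn ℝ 1 f halfPlane) (hp : p ∈ halfPlane) :
    xDeriv f p = fderivWithin ℝ f halfPlane p (1, 0) :=
  (hasDerivAt_slice hf hp).deriv

theorem hasDerivAt_xDeriv (hf : ContDiffOn ℝ 1 f halfPlane) (hp : p ∈ halfPlane) :
    HasDerivAt (fun x => f (x, p.2)) (xDeriv f p) p.1 :=
  (hasDerivAt_slice hf hp).differentiableAt.hasDerivAt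

theorem continuousOn_xDeriv (hf : ContDiffOn ℝ 1 f halfPlane) :
    ContinuousOn (xDeriv f) halfPlane :=
  ((hf.continuousOn_fderivWithin uniqueDiffOn_halfPlane le_rfl).clm_apply
    continuousOn_const).congr fun _ => xDeriv_eq_fderivWithin hf

theorem hasStrictFDerivAt_of_pos (hf : ContDiffOn ℝ 1 f halfPlane) (hp : 0 < p.2) :
    HasStrictFDerivAt f (fderiv ℝ f p) p :=
  (hf.contDiffAt (halfPlane_mem_nhds hp)).hasStrictFDerivAt one_ne_zero

theorem xDeriv_eq_fderiv (hf : ContDiffOn ℝ 1 f halfPlane) (hp : 0 < p.2) :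
    xDeriv f p = fderiv ℝ f p (1, 0) := by
  rw [xDeriv_eq_fderivWithin hf ⟨mem_univ _, hp.le⟩,
    fderivWithin_of_mem_nhds (halfPlane_mem_nhds hp)]

theorem deriv_time_eq_fderiv (hf : ContDiffOn ℝ 1 f halfPlane) (ht : 0 < t) :
    deriv (fun t' => f (x, t')) t = fderiv ℝ f (x, t) (0, 1) :=
  (HasFDerivAt.comp_hasDerivAt (l := f) (f := fun t => (x, t)) t
    (hasStrictFDerivAt_of_pos hf ht).hasFDerivAt
    ((hasDerivAt_const t x).prodMk (hasDerivAt_id t))).deriv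

theorem tendsto_shift (hX : ContinuousAt X t) :
    Tendsto (fun q : ℝ × ℝ => (X q.2 + q.1, q.2)) (𝓝[≠] 0 ×ˢ 𝓝 t) (𝓝 (X t, t)) := by
  have hshift : ContinuousAt (fun q : ℝ × ℝ => (X q.2 + q.1, q.2)) (0, t) :=
    ((hX.comp' continuousAt_snd).add continuousAt_fst).prodMk continuousAt_snd
  rw [ContinuousAt, nhds_prod_eq, add_zero] at hshift
  exact hshift.mono_left (prod_mono_left _ nhdsWithin_le_nhds)

theorem tendsto_slope_shift (hf : ContDiffOn ℝ 1 f halfPlane) (ht : 0 < t)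
    (hX : ContinuousAt X t) :
    Tendsto (fun q : ℝ × ℝ => q.1⁻¹ * (f (X q.2 + q.1, q.2) - f (X q.2, q.2)))
      (𝓝[≠] 0 ×ˢ 𝓝 t) (𝓝 (xDeriv f (X t, t))) := by
  have hbase : Tendsto (fun q : ℝ × ℝ => (X q.2, q.2)) (𝓝[≠] 0 ×ˢ 𝓝 t) (𝓝 (X t, t)) :=
    (hX.prodMk continuousAt_id).tendsto.comp tendsto_snd
  have ho : (fun q : ℝ × ℝ => f (X q.2 + q.1, q.2) - f (X q.2, q.2) - q.1 * xDeriv f (X t, t))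
      =o[𝓝[≠] 0 ×ˢ 𝓝 t] fun q => q.1 := by
    refine (((hasStrictFDerivAt_of_pos hf ht).isLittleO.comp_tendsto
      ((tendsto_shift hX).prodMk_nhds hbase)).congr_left fun q => ?_).trans_isBigO
      (.of_bound 1 (.of_forall fun q => ?_))
    · have : ((X q.2 + q.1, q.2) - (X q.2, q.2) : ℝ × ℝ) = q.1 • (1, 0) := by ext <;> simp
      simp only [Function.comp_apply, this, map_smul, smul_eq_mul,
        xDeriv_eq_fderiv hf (p := (X t, t)) ht]
    · simp
  have hne : ∀ᶠ q : ℝ × ℝ in 𝓝[≠] 0 ×ˢ 𝓝 t, q.1 ≠ 0 :=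
    tendsto_fst.eventually self_mem_nhdsWithin
  refine (zero_add (xDeriv f (X t, t)) ▸ ho.tendsto_div_nhds_zero.add_const _).congr' ?_
  filter_upwards [hne] with q hq
  field_simp
  ring

theorem contDiffOn_comp_reflection (hf : ContDiffOn ℝ 1 f halfPlane) :
    ContDiffOn ℝ 1 (fun p => f (-p.1, p.2)) halfPlane :=
  hf.comp (contDiff_fst.neg.prodMk contDiff_snd).contDiffOn fun _ hp => mk_mem_halfPlane hp.2

namespace IsTransported

theorem hasDerivAt_comp (hv : IsTransported v f) (hf : ContDiffOn ℝ 1 f halfPlane) (ht : 0 < t)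
    (hX : HasDerivAt X w t) :
    HasDerivAt (fun t => f (X t, t)) ((w - v (X t, t)) * xDeriv f (X t, t)) t := by
  have hcomp : HasDerivAt (fun t => f (X t, t)) (fderiv ℝ f (X t, t) (w, 1)) t :=
    HasFDerivAt.comp_hasDerivAt (l := f) (f := fun t => (X t, t)) t
      (hasStrictFDerivAt_of_pos hf ht).hasFDerivAt (hX.prodMk (hasDerivAt_id t))
  have hsplit : ((w, 1) : ℝ × ℝ) = (w - v (X t, t)) • (1, 0) + (v (X t, t), 1) := by
    ext <;> simp
  rwa [hsplit, map_add, map_smul, hv _ ht, add_zero, smul_eq_mul, ← xDeriv_eq_fderiv hf ht]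
    at hcomp

theorem eq_along_integralCurve (hv : IsTransported v f) (hf : ContDiffOn ℝ 1 f halfPlane)
    (ha : 0 ≤ a) (hab : a ≤ b) (hX : IsIntegralCurveOn X (fun t x => v (x, t)) (Icc a b)) :
    f (X b, b) = f (X a, a) := by
  refine eq_of_hasDerivAt_zero (f := fun t => f (X t, t)) hab
    (hf.continuousOn.comp (hX.continuousOn.prodMk continuousOn_id)
      fun t ht => mk_mem_halfPlane (ha.trans ht.1)) fun t ht => ?_
  simpa only [sub_self, zero_mul] using hv.hasDerivAt_comp hf (ha.trans_lt ht.1)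
    (hX.isIntegralCurveAt (Icc_mem_nhds ht.1 ht.2)).hasDerivAt

theorem hasDerivAt_slope (hv : IsTransported v f) (hf : ContDiffOn ℝ 1 f halfPlane) (ht : 0 < t)
    (hX : HasDerivAt X (v (X t, t)) t) (k : ℝ) :
    HasDerivAt (fun t => k⁻¹ * (f (X t + k, t) - f (X t, t)))
      (-(k⁻¹ * (v (X t + k, t) - v (X t, t)) * xDeriv f (X t + k, t))) t :=
  (((hv.hasDerivAt_comp hf ht (hX.add_const k)).fun_sub
    (hv.hasDerivAt_comp hf ht hX)).const_mul k⁻¹).congr_deriv (by ring)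

theorem hasDerivAt_xDeriv (hv : IsTransported v f) (hf : ContDiffOn ℝ 1 f halfPlane)
    (hvC : ContDiffOn ℝ 1 v halfPlane) (ha : 0 ≤ a)
    (hX : IsIntegralCurveOn X (fun t x => v (x, t)) (Icc a b)) (ht : t ∈ Ioo a b) :
    HasDerivAt (fun t => xDeriv f (X t, t)) (-(xDeriv v (X t, t) * xDeriv f (X t, t))) t := by
  have hpos : ∀ t ∈ Ioo a b, 0 < t := fun t ht => ha.trans_lt ht.1
  have hX' : ∀ t ∈ Ioo a b, HasDerivAt X (v (X t, t)) t := fun t ht =>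
    (hX.isIntegralCurveAt (Icc_mem_nhds ht.1 ht.2)).hasDerivAt
  have hcont : ∀ g : ℝ × ℝ → ℝ, ContDiffOn ℝ 1 g halfPlane → ∀ t ∈ Ioo a b,
      ContinuousAt (xDeriv g) (X t, t) := fun g hg t ht =>
    (continuousOn_xDeriv hg).continuousAt (halfPlane_mem_nhds (hpos t ht))
  -- `f` need not be twice differentiable, so the spatial difference quotients are differentiated
  -- along the curve, before their step `k` tends to `0`.
  have hunif : TendstoLocallyUniformlyOn
      (fun k t => -(k⁻¹ * (v (X t + k, t) - v (X t, t)) * xDeriv f (X t + k, t)))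
      (fun t => -(xDeriv v (X t, t) * xDeriv f (X t, t))) (𝓝[≠] 0) (Ioo a b) := by
    refine isOpen_Ioo.tendstoLocallyUniformlyOn_iff_forall_tendsto.2 fun t ht => ?_
    have hXt : ContinuousAt X t := (hX' t ht).continuousAt
    have hcurve : ContinuousAt (fun t => (X t, t)) t := hXt.prodMk continuousAt_id
    have hlimit := (((hcont v hvC t ht).tendsto.comp hcurve.tendsto).mul
      ((hcont f hf t ht).tendsto.comp hcurve.tendsto)).neg
    have hquot := ((tendsto_slope_shift hvC (hpos t ht) hXt).mul
      ((hcont f hf t ht).tendsto.comp (tendsto_shift hXt))).neg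
    exact ((hlimit.comp tendsto_snd).prodMk_nhds hquot).mono_right (nhds_le_uniformity _)
  refine hasDerivAt_of_tendstoLocallyUniformlyOn isOpen_Ioo hunif
    (.of_forall fun k t ht => hv.hasDerivAt_slope hf (hpos t ht) (hX' t ht) k) (fun t ht => ?_) ht
  exact (_root_.hasDerivAt_xDeriv hf (mk_mem_halfPlane (hpos t ht).le)).tendsto_slope_zero

theorem neg_comp_reflection (hv : IsTransported v f) :
    IsTransported (fun p => -v (-p.1, p.2)) (fun p => -f (-p.1, p.2)) := by
  intro p hp
  let e : (ℝ × ℝ) ≃L[ℝ] ℝ × ℝ := (ContinuousLinearEquiv.neg ℝ).prodCongr (.refl ℝ ℝ)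
  have hfderiv : fderiv ℝ (fun p => -f (-p.1, p.2)) p =
      -(fderiv ℝ f (e p) ∘L (e : ℝ × ℝ →L[ℝ] ℝ × ℝ)) :=
    fderiv_fun_neg.trans (congrArg Neg.neg (e.comp_right_fderiv (f := f)))
  have hdirection : e (-v (e p), 1) = (v (e p), 1) := by simp [e]
  change fderiv ℝ (fun p => -f (-p.1, p.2)) p (-v (e p), 1) = 0
  rw [hfderiv, neg_apply, ContinuousLinearMap.comp_apply,
    ContinuousLinearEquiv.coe_coe, hdirection, hv (e p) hp, neg_zero]

end IsTransported

end Transport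

/-! ### The diagonal system -/

/-- The speeds `κ`, as functions of `w = s - r > 0`, for which weighted gradients of a bounded
solution of the diagonal system satisfy a uniform Riccati inequality: `κ' / √κ` is bounded below by
a positive constant on every interval `(0, B]`. -/
structure IsRiccatiSpeed (κ : ℝ → ℝ) : Prop where
  pos : ∀ w > 0, 0 < κ w
  contDiffOn : ContDiffOn ℝ 1 κ (Ioi 0)
  exists_mul_sqrt_le_deriv : ∀ B, ∃ k > 0, ∀ w ∈ Ioc 0 B, k * √(κ w) ≤ deriv κ w

/-- The speed of the forward wave of the diagonal system at a point of the half plane. -/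
def waveSpeed (κ : ℝ → ℝ) (s r : ℝ × ℝ → ℝ) (p : ℝ × ℝ) : ℝ := κ (s p - r p)

/-- A classical solution on the closed half plane of the diagonal system `s_t + κ(s - r) s_x = 0`,
`r_t - κ(s - r) r_x = 0` with values in the region `r < s`. -/
structure DiagonalSolution (κ : ℝ → ℝ) (s r : ℝ × ℝ → ℝ) : Prop where
  contDiffOn_s : ContDiffOn ℝ 1 s halfPlane
  contDiffOn_r : ContDiffOn ℝ 1 r halfPlane
  lt : ∀ p ∈ halfPlane, r p < s p
  isTransported_s : IsTransported (waveSpeed κ s r) s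
  isTransported_r : IsTransported (-waveSpeed κ s r) r

section DiagonalSystem

variable {κ : ℝ → ℝ} {s r : ℝ × ℝ → ℝ} {S R : ℝ} {X : ℝ → ℝ} {t T x : ℝ} {p : ℝ × ℝ}

namespace IsRiccatiSpeed

theorem hasDerivAt (hκ : IsRiccatiSpeed κ) {w : ℝ} (hw : 0 < w) : HasDerivAt κ (deriv κ w) w :=
  ((hκ.contDiffOn.contDiffAt (Ioi_mem_nhds hw)).differentiableAt one_ne_zero).hasDerivAt

theorem strictMonoOn (hκ : IsRiccatiSpeed κ) : StrictMonoOn κ (Ioi 0) := by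
  refine strictMonoOn_of_deriv_pos (convex_Ioi 0) hκ.contDiffOn.continuousOn fun w hw => ?_
  rw [interior_Ioi] at hw
  obtain ⟨k, hk, hle⟩ := hκ.exists_mul_sqrt_le_deriv w
  exact (mul_pos hk (sqrt_pos.2 (hκ.pos w hw))).trans_le (hle w ⟨hw, le_rfl⟩)

end IsRiccatiSpeed

theorem waveSpeed_reflect (κ : ℝ → ℝ) (s r : ℝ × ℝ → ℝ) :
    waveSpeed κ (fun p => -r (-p.1, p.2)) (fun p => -s (-p.1, p.2)) =
      fun p => waveSpeed κ s r (-p.1, p.2) := by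
  funext p
  simp only [waveSpeed, neg_sub_neg]

namespace DiagonalSolution

theorem reflect (h : DiagonalSolution κ s r) :
    DiagonalSolution κ (fun p => -r (-p.1, p.2)) (fun p => -s (-p.1, p.2)) where
  contDiffOn_s := (contDiffOn_comp_reflection h.contDiffOn_r).neg
  contDiffOn_r := (contDiffOn_comp_reflection h.contDiffOn_s).neg
  lt p hp := neg_lt_neg (h.lt (-p.1, p.2) (mk_mem_halfPlane hp.2))
  isTransported_s := by
    simpa only [waveSpeed_reflect, Pi.neg_apply, neg_neg] using
      h.isTransported_r.neg_comp_reflection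
  isTransported_r := by
    rw [waveSpeed_reflect]
    exact h.isTransported_s.neg_comp_reflection

theorem waveSpeed_pos (h : DiagonalSolution κ s r) (hκ : IsRiccatiSpeed κ) (hp : p ∈ halfPlane) :
    0 < waveSpeed κ s r p :=
  hκ.pos _ (sub_pos.2 (h.lt p hp))

theorem waveSpeed_le (h : DiagonalSolution κ s r) (hκ : IsRiccatiSpeed κ) (hp : p ∈ halfPlane)
    (hs : s p ≤ S) (hr : R ≤ r p) : waveSpeed κ s r p ≤ κ (S - R) := by
  have hlt : 0 < s p - r p := sub_pos.2 (h.lt p hp)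
  have hle : s p - r p ≤ S - R := by linarith
  exact hκ.strictMonoOn.monotoneOn hlt (hlt.trans_le hle) hle

theorem contDiffOn_waveSpeed (h : DiagonalSolution κ s r) (hκ : IsRiccatiSpeed κ) :
    ContDiffOn ℝ 1 (waveSpeed κ s r) halfPlane :=
  hκ.contDiffOn.comp (h.contDiffOn_s.sub h.contDiffOn_r) fun p hp => sub_pos.2 (h.lt p hp)

theorem monotoneOn_of_isIntegralCurveOn (h : DiagonalSolution κ s r) (hκ : IsRiccatiSpeed κ)
    {a b : ℝ} (ha : 0 ≤ a)
    (hX : IsIntegralCurveOn X (fun t x => waveSpeed κ s r (x, t)) (Icc a b)) :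
    MonotoneOn X (Icc a b) :=
  monotoneOn_of_hasDerivWithinAt_nonneg (convex_Icc a b) hX.continuousOn
    (fun t ht => (hX t (interior_subset ht)).mono interior_subset) fun _ ht =>
    (h.waveSpeed_pos hκ (mk_mem_halfPlane (ha.trans (interior_subset ht).1))).le

theorem antitoneOn_of_isIntegralCurveOn_neg (h : DiagonalSolution κ s r) (hκ : IsRiccatiSpeed κ)
    {a b : ℝ} (ha : 0 ≤ a)
    (hX : IsIntegralCurveOn X (fun t x => (-waveSpeed κ s r) (x, t)) (Icc a b)) :
    AntitoneOn X (Icc a b) :=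
  antitoneOn_of_hasDerivWithinAt_nonpos (convex_Icc a b) hX.continuousOn
    (fun t ht => (hX t (interior_subset ht)).mono interior_subset) fun _ ht =>
    neg_nonpos.2 (h.waveSpeed_pos hκ (mk_mem_halfPlane (ha.trans (interior_subset ht).1))).le

theorem s_le_of_le (h : DiagonalSolution κ s r) (hκ : IsRiccatiSpeed κ)
    (hS : ∀ x, s (x, 0) ≤ S) (ht : 0 ≤ t)
    (hX : IsIntegralCurveOn X (fun t x => waveSpeed κ s r (x, t)) (Icc 0 t)) (hx : X t ≤ x) :
    s (x, t) ≤ S := by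
  have hc : ContDiffOn ℝ 1 (waveSpeed κ s r) (univ ×ˢ Icc 0 t) :=
    (h.contDiffOn_waveSpeed hκ).mono (prod_mono_right Icc_subset_Ici_self)
  -- Followed backwards from `(x, t)`, the characteristic is trapped between the curve `X` on its
  -- left and the line through `x`, so it reaches `t = 0` without an a priori bound on its speed.
  obtain ⟨Y, hYt, hY⟩ := exists_isIntegralCurveOn_of_abs_sub_le (R := x - X 0) hc
    (right_mem_Icc.2 ht) fun t' ht' Y hYt hY => by
      rw [uIcc_of_ge ht'.2] at hY
      have hsub : Icc t' t ⊆ Icc 0 t := Icc_subset_Icc_left ht'.1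
      have hXY : X t' ≤ Y t' := integralCurve_le_of_le_right (hc.mono (prod_mono_right hsub))
        (hX.mono hsub) hY (hYt ▸ hx) t' (left_mem_Icc.2 ht'.2)
      have hX0 : X 0 ≤ X t' :=
        h.monotoneOn_of_isIntegralCurveOn hκ le_rfl hX (left_mem_Icc.2 ht) ht' ht'.1
      have hYx : Y t' ≤ x := hYt ▸ h.monotoneOn_of_isIntegralCurveOn hκ ht'.1 hY
        (left_mem_Icc.2 ht'.2) (right_mem_Icc.2 ht'.2) ht'.2
      rw [abs_sub_comm, abs_of_nonneg (sub_nonneg.2 hYx)]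
      linarith
  rw [← hYt, h.isTransported_s.eq_along_integralCurve h.contDiffOn_s le_rfl ht hY]
  exact hS _

theorem le_r_of_isIntegralCurveOn (h : DiagonalSolution κ s r) (hκ : IsRiccatiSpeed κ)
    (hS : ∀ x, s (x, 0) ≤ S) (hR : ∀ x, R ≤ r (x, 0)) (ht : 0 ≤ t)
    (hX : IsIntegralCurveOn X (fun t x => waveSpeed κ s r (x, t)) (Icc 0 t)) :
    R ≤ r (X t, t) := by
  have hc : ContDiffOn ℝ 1 (-waveSpeed κ s r) (univ ×ˢ Icc 0 t) :=
    ((h.contDiffOn_waveSpeed hκ).mono (prod_mono_right Icc_subset_Ici_self)).neg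
  -- Followed backwards from `X t`, the characteristic of `r` stays to the right of `X`, where
  -- `s ≤ S`; since `r` is constant on it, its speed is bounded.
  obtain ⟨Y, hYt, hY⟩ := exists_isIntegralCurveOn_of_abs_velocity_le (x₀ := X t)
    (C := κ (S - r (X t, t))) hc (right_mem_Icc.2 ht) fun t' ht' Y hYt hY => by
      rw [uIcc_of_ge ht'.2] at hY
      have hp : (Y t', t') ∈ halfPlane := mk_mem_halfPlane ht'.1
      have hXY : X t' ≤ Y t' := calc
        X t' ≤ X t := h.monotoneOn_of_isIntegralCurveOn hκ le_rfl hX ht' (right_mem_Icc.2 ht) ht'.2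
        _ = Y t := hYt.symm
        _ ≤ Y t' := h.antitoneOn_of_isIntegralCurveOn_neg hκ ht'.1 hY
          (left_mem_Icc.2 ht'.2) (right_mem_Icc.2 ht'.2) ht'.2
      have hs : s (Y t', t') ≤ S :=
        h.s_le_of_le hκ hS ht'.1 (hX.mono (Icc_subset_Icc_right ht'.2)) hXY
      have hr : r (Y t, t) = r (Y t', t') :=
        h.isTransported_r.eq_along_integralCurve h.contDiffOn_r ht'.1 ht'.2 hY
      rw [Pi.neg_apply, abs_neg, abs_of_pos (h.waveSpeed_pos hκ hp)]
      exact h.waveSpeed_le hκ hp hs (hYt ▸ hr.le)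
  rw [← hYt, h.isTransported_r.eq_along_integralCurve h.contDiffOn_r le_rfl ht hY]
  exact hR _

theorem waveSpeed_le_of_isIntegralCurveOn (h : DiagonalSolution κ s r) (hκ : IsRiccatiSpeed κ)
    (hS : ∀ x, s (x, 0) ≤ S) (hR : ∀ x, R ≤ r (x, 0)) (ht : 0 ≤ t)
    (hX : IsIntegralCurveOn X (fun t x => waveSpeed κ s r (x, t)) (Icc 0 t)) :
    waveSpeed κ s r (X t, t) ≤ κ (S - R) :=
  h.waveSpeed_le hκ (mk_mem_halfPlane ht) (h.s_le_of_le hκ hS ht hX le_rfl)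
    (h.le_r_of_isIntegralCurveOn hκ hS hR ht hX)

theorem exists_isIntegralCurveOn (h : DiagonalSolution κ s r) (hκ : IsRiccatiSpeed κ)
    (hS : ∀ x, s (x, 0) ≤ S) (hR : ∀ x, R ≤ r (x, 0)) (hT : 0 ≤ T) (x₀ : ℝ) :
    ∃ X : ℝ → ℝ, X 0 = x₀ ∧
      IsIntegralCurveOn X (fun t x => waveSpeed κ s r (x, t)) (Icc 0 T) := by
  refine exists_isIntegralCurveOn_of_abs_velocity_le (C := κ (S - R))
    ((h.contDiffOn_waveSpeed hκ).mono (prod_mono_right Icc_subset_Ici_self))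
    (left_mem_Icc.2 hT) fun t ht X _ hX => ?_
  rw [uIcc_of_le ht.1] at hX
  rw [abs_of_pos (h.waveSpeed_pos hκ (mk_mem_halfPlane ht.1))]
  exact h.waveSpeed_le_of_isIntegralCurveOn hκ hS hR ht.1 hX

theorem xDeriv_waveSpeed (h : DiagonalSolution κ s r) (hκ : IsRiccatiSpeed κ)
    (hp : p ∈ halfPlane) :
    xDeriv (waveSpeed κ s r) p = deriv κ (s p - r p) * (xDeriv s p - xDeriv r p) :=
  ((hκ.hasDerivAt (sub_pos.2 (h.lt p hp))).comp p.1
    ((hasDerivAt_xDeriv h.contDiffOn_s hp).sub (hasDerivAt_xDeriv h.contDiffOn_r hp))).deriv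

theorem hasDerivAt_waveSpeed (h : DiagonalSolution κ s r) (hκ : IsRiccatiSpeed κ) (ht : 0 < t)
    (hX : HasDerivAt X (waveSpeed κ s r (X t, t)) t) :
    HasDerivAt (fun t => waveSpeed κ s r (X t, t))
      (-(2 * deriv κ (s (X t, t) - r (X t, t)) * waveSpeed κ s r (X t, t) *
        xDeriv r (X t, t))) t := by
  have hw := (h.isTransported_s.hasDerivAt_comp h.contDiffOn_s ht hX).sub
    (h.isTransported_r.hasDerivAt_comp h.contDiffOn_r ht hX)
  have hpos := sub_pos.2 (h.lt (X t, t) (mk_mem_halfPlane ht.le))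
  refine ((hκ.hasDerivAt hpos).comp t hw).congr_deriv ?_
  rw [Pi.neg_apply]
  ring

/- The weight `√κ` is the integrating factor that cancels the term in `r_x` of the equation
`(s_x)' = -κ' (s_x - r_x) s_x` along forward characteristics. -/
theorem hasDerivAt_sqrt_waveSpeed_mul_xDeriv (h : DiagonalSolution κ s r) (hκ : IsRiccatiSpeed κ)
    (hX : IsIntegralCurveOn X (fun t x => waveSpeed κ s r (x, t)) (Icc 0 T)) (ht : t ∈ Ioo 0 T) :
    HasDerivAt (fun t => √(waveSpeed κ s r (X t, t)) * xDeriv s (X t, t))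
      (-(deriv κ (s (X t, t) - r (X t, t)) * √(waveSpeed κ s r (X t, t)) *
        xDeriv s (X t, t) ^ 2)) t := by
  have hp : (X t, t) ∈ halfPlane := mk_mem_halfPlane ht.1.le
  have hpos : 0 < waveSpeed κ s r (X t, t) := h.waveSpeed_pos hκ hp
  have hsqrt := (h.hasDerivAt_waveSpeed hκ ht.1
    (hX.isIntegralCurveAt (Icc_mem_nhds ht.1 ht.2)).hasDerivAt).sqrt hpos.ne'
  have hs := h.isTransported_s.hasDerivAt_xDeriv h.contDiffOn_s (h.contDiffOn_waveSpeed hκ) le_rfl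
    hX ht
  refine (hsqrt.mul hs).congr_deriv ?_
  rw [h.xDeriv_waveSpeed hκ hp]
  field_simp
  rw [sq_sqrt hpos.le]
  ring

theorem continuousOn_sqrt_waveSpeed_mul_xDeriv (h : DiagonalSolution κ s r)
    (hκ : IsRiccatiSpeed κ) (hX : ContinuousOn X (Icc 0 T)) :
    ContinuousOn (fun t => √(waveSpeed κ s r (X t, t)) * xDeriv s (X t, t)) (Icc 0 T) := by
  have hcurve : ContinuousOn (fun t => (X t, t)) (Icc 0 T) := hX.prodMk continuousOn_id
  have hmaps : MapsTo (fun t => (X t, t)) (Icc 0 T) halfPlane := fun t ht => mk_mem_halfPlane ht.1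
  exact ((h.contDiffOn_waveSpeed hκ).continuousOn.comp hcurve hmaps).sqrt.mul
    ((continuousOn_xDeriv h.contDiffOn_s).comp hcurve hmaps)

theorem neg_deriv_mul_sqrt_waveSpeed_mul_sq_le (h : DiagonalSolution κ s r) {k : ℝ}
    (hkκ : ∀ w ∈ Ioc 0 (S - R), k * √(κ w) ≤ deriv κ w) (hp : p ∈ halfPlane)
    (hs : s p ≤ S) (hr : R ≤ r p) :
    -(deriv κ (s p - r p) * √(waveSpeed κ s r p) * xDeriv s p ^ 2) ≤
      -k * (√(waveSpeed κ s r p) * xDeriv s p) ^ 2 := by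
  have hκp : k * √(waveSpeed κ s r p) ≤ deriv κ (s p - r p) :=
    hkκ _ ⟨sub_pos.2 (h.lt p hp), by linarith⟩
  calc -(deriv κ (s p - r p) * √(waveSpeed κ s r p) * xDeriv s p ^ 2)
      ≤ -(k * √(waveSpeed κ s r p) * √(waveSpeed κ s r p) * xDeriv s p ^ 2) := by gcongr
    _ = -k * (√(waveSpeed κ s r p) * xDeriv s p) ^ 2 := by ring

theorem xDeriv_s_nonneg (h : DiagonalSolution κ s r) (hκ : IsRiccatiSpeed κ)
    (hS : ∀ x, s (x, 0) ≤ S) (hR : ∀ x, R ≤ r (x, 0)) (x : ℝ) : 0 ≤ xDeriv s (x, 0) := by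
  by_contra! hneg
  obtain ⟨k, hk, hkκ⟩ := hκ.exists_mul_sqrt_le_deriv (S - R)
  set y₀ : ℝ := √(waveSpeed κ s r (x, 0)) * xDeriv s (x, 0)
  have hy₀ : y₀ < 0 :=
    mul_neg_of_pos_of_neg (sqrt_pos.2 (h.waveSpeed_pos hκ (mk_mem_halfPlane le_rfl))) hneg
  have hrate : 0 < k * -y₀ := mul_pos hk (neg_pos.2 hy₀)
  set T : ℝ := (k * -y₀)⁻¹
  have hT : 0 < T := inv_pos.2 hrate
  obtain ⟨X, hX0, hX⟩ := h.exists_isIntegralCurveOn hκ hS hR hT.le x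
  refine (mul_lt_one_of_riccati hk.le hT.le
    (h.continuousOn_sqrt_waveSpeed_mul_xDeriv hκ hX.continuousOn)
    (fun t ht => h.hasDerivAt_sqrt_waveSpeed_mul_xDeriv hκ hX ht) (fun t ht => ?_)
    (by simpa only [hX0] using hy₀)).ne ?_
  · have hXt := hX.mono (Icc_subset_Icc_right ht.2.le)
    exact h.neg_deriv_mul_sqrt_waveSpeed_mul_sq_le hkκ (mk_mem_halfPlane ht.1.le)
      (h.s_le_of_le hκ hS ht.1.le hXt le_rfl) (h.le_r_of_isIntegralCurveOn hκ hS hR ht.1.le hXt)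
  · simpa only [hX0] using mul_inv_cancel₀ hrate.ne'

theorem xDeriv_r_nonneg (h : DiagonalSolution κ s r) (hκ : IsRiccatiSpeed κ)
    (hS : ∀ x, s (x, 0) ≤ S) (hR : ∀ x, R ≤ r (x, 0)) (x : ℝ) : 0 ≤ xDeriv r (x, 0) := by
  have hreflect := h.reflect.xDeriv_s_nonneg hκ (fun x => neg_le_neg (hR (-x)))
    (fun x => neg_le_neg (hS (-x))) (-x)
  have hflip : xDeriv (fun p => -r (-p.1, p.2)) (-x, 0) = xDeriv r (x, 0) := by
    simp [xDeriv, deriv_comp_neg (fun y => r (y, 0))]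
  rwa [hflip] at hreflect

end DiagonalSolution

theorem isRiccatiSpeed_const_mul_rpow {C α : ℝ} (hC : 0 < C) (hα₀ : 0 < α) (hα₂ : α ≤ 2) :
    IsRiccatiSpeed fun w => C * w ^ α where
  pos w hw := by positivity
  contDiffOn := contDiffOn_const.mul (contDiffOn_id.rpow_const_of_ne fun _ hw => (mem_Ioi.1 hw).ne')
  exists_mul_sqrt_le_deriv B := by
    have : 0 < max B 1 := zero_lt_one.trans_le (le_max_right B 1)
    refine ⟨√C * α * max B 1 ^ (α / 2 - 1), by positivity, fun w ⟨hw, hwB⟩ => ?_⟩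
    have hsqrt : √(C * w ^ α) = √C * w ^ (α / 2) := by
      rw [sqrt_mul hC.le, sqrt_eq_rpow (w ^ α), ← rpow_mul hw.le, mul_one_div]
    have hdecay : max B 1 ^ (α / 2 - 1) ≤ w ^ (α / 2 - 1) :=
      rpow_le_rpow_of_nonpos hw (hwB.trans (le_max_left B 1)) (by linarith)
    rw [((hasDerivAt_rpow_const (.inl hw.ne')).const_mul C).deriv, hsqrt]
    calc √C * α * max B 1 ^ (α / 2 - 1) * (√C * w ^ (α / 2))
        ≤ √C * α * w ^ (α / 2 - 1) * (√C * w ^ (α / 2)) := by gcongr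
      _ = √C * √C * α * (w ^ (α / 2 - 1) * w ^ (α / 2)) := by ring
      _ = C * (α * w ^ (α - 1)) := by
        rw [mul_self_sqrt hC.le, ← rpow_add hw, mul_assoc]
        ring_nf

end DiagonalSystem

/-! ### The `γ`-law p-system -/

/-- The Lagrangian sound speed of the `γ`-law as a function of `w = s - r = 2 η(τ)`, namely
`K_c (w / 2) ^ ((γ + 1) / (γ - 1))`. -/
noncomputable def gammaLawSpeed (K₁ γ w : ℝ) : ℝ :=
  KcP K₁ γ / 2 ^ ((γ + 1) / (γ - 1)) * w ^ ((γ + 1) / (γ - 1))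

/-- The Riemann invariants `u + σ η(τ)`: `s` for `σ = 1` and `r` for `σ = -1`. -/
noncomputable def riemannInvariant (K₁ γ σ : ℝ) (τ u : ℝ → ℝ → ℝ) (p : ℝ × ℝ) : ℝ :=
  u p.1 p.2 + σ * etaP K₁ γ (τ p.1 p.2)

section GammaLaw

variable {K₁ γ τ₁ τ₂ : ℝ}

theorem etaP_pos (hK₁ : 0 < K₁) (hγ : 1 < γ) (hτ : 0 < τ₁) : 0 < etaP K₁ γ τ₁ := by
  have : 0 < γ - 1 := sub_pos.2 hγ
  unfold etaP
  positivity

theorem etaP_le_etaP (hγ : 1 < γ) (hτ₁ : 0 < τ₁) (h : τ₁ ≤ τ₂) :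
    etaP K₁ γ τ₂ ≤ etaP K₁ γ τ₁ := by
  have : 0 < γ - 1 := sub_pos.2 hγ
  exact mul_le_mul_of_nonneg_left (rpow_le_rpow_of_nonpos hτ₁ h (by linarith)) (by positivity)

theorem contDiffOn_etaP : ContDiffOn ℝ 1 (etaP K₁ γ) (Ioi 0) :=
  contDiffOn_const.mul (contDiffOn_id.rpow_const_of_ne fun _ hτ => (mem_Ioi.1 hτ).ne')

theorem hasDerivAt_etaP (hγ : 1 < γ) (hτ : 0 < τ₁) :
    HasDerivAt (etaP K₁ γ) (-soundP K₁ γ τ₁) τ₁ := by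
  have hγ' : γ - 1 ≠ 0 := (sub_pos.2 hγ).ne'
  refine ((hasDerivAt_rpow_const (.inl hτ.ne')).const_mul _).congr_deriv ?_
  rw [soundP, show -(γ - 1) / 2 - 1 = -(γ + 1) / 2 by ring]
  field_simp

theorem hasDerivAt_pressure (hK₁γ : 0 ≤ K₁ * γ) (hτ : 0 < τ₁) :
    HasDerivAt (fun τ => K₁ * τ ^ (-γ)) (-soundP K₁ γ τ₁ ^ 2) τ₁ := by
  refine ((hasDerivAt_rpow_const (.inl hτ.ne')).const_mul K₁).congr_deriv ?_
  rw [soundP, mul_pow, sq_sqrt hK₁γ, ← rpow_mul_natCast hτ.le,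
    show -(γ + 1) / 2 * (2 : ℕ) = -γ - 1 by push_cast; ring]
  ring

theorem soundP_eq_KcP_mul_etaP_rpow (hK₁ : 0 < K₁) (hγ : 1 < γ) (hτ : 0 < τ₁) :
    soundP K₁ γ τ₁ = KcP K₁ γ * etaP K₁ γ τ₁ ^ ((γ + 1) / (γ - 1)) := by
  have hγ' : 0 < γ - 1 := sub_pos.2 hγ
  have hA : 0 < 2 * √(K₁ * γ) / (γ - 1) := by positivity
  rw [soundP, KcP, KtauP, etaP, mul_rpow hA.le (by positivity), ← rpow_mul hA.le,
    ← rpow_mul hτ.le, mul_assoc, ← mul_assoc (_ ^ (_ : ℝ)) (_ ^ (_ : ℝ)), ← rpow_add hA]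
  have hexp : 2 / (γ - 1) * (-(γ + 1) / 2) + (γ + 1) / (γ - 1) = 0 := by field_simp; ring
  have hexp' : -(γ - 1) / 2 * ((γ + 1) / (γ - 1)) = -(γ + 1) / 2 := by field_simp
  rw [hexp, hexp', rpow_zero, one_mul]

theorem gammaLawSpeed_two_mul_etaP (hK₁ : 0 < K₁) (hγ : 1 < γ) (hτ : 0 < τ₁) :
    gammaLawSpeed K₁ γ (2 * etaP K₁ γ τ₁) = soundP K₁ γ τ₁ := by
  rw [gammaLawSpeed, mul_rpow zero_le_two (etaP_pos hK₁ hγ hτ).le,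
    soundP_eq_KcP_mul_etaP_rpow hK₁ hγ hτ]
  field_simp

theorem isRiccatiSpeed_gammaLawSpeed (hK₁ : 0 < K₁) (hγ : 3 ≤ γ) :
    IsRiccatiSpeed (gammaLawSpeed K₁ γ) := by
  have hγ' : 0 < γ - 1 := by linarith
  refine isRiccatiSpeed_const_mul_rpow ?_ (by positivity) ((div_le_iff₀ hγ').2 (by linarith))
  unfold KcP KtauP
  positivity

end GammaLaw

namespace PSysSol

variable {K₁ γ : ℝ} {τ u : ℝ → ℝ → ℝ}

theorem contDiffOn_riemannInvariant (h : PSysSol K₁ γ (Ici 0) 1 τ u) (σ : ℝ) :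
    ContDiffOn ℝ 1 (riemannInvariant K₁ γ σ τ u) halfPlane := by
  obtain ⟨hpos, hτ, hu, -, -⟩ := h
  exact hu.add (contDiffOn_const.mul (contDiffOn_etaP.comp hτ fun p hp => hpos p.1 p.2 hp.2))

theorem deriv_pressure (h : PSysSol K₁ γ (Ici 0) 1 τ u) (hK₁γ : 0 ≤ K₁ * γ) {x t : ℝ}
    (ht : 0 ≤ t) :
    deriv (fun x => K₁ * τ x t ^ (-γ)) x =
      -soundP K₁ γ (τ x t) ^ 2 * xDeriv (fun p => τ p.1 p.2) (x, t) :=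
  (HasDerivAt.comp (h₂ := fun τ => K₁ * τ ^ (-γ)) x (hasDerivAt_pressure hK₁γ (h.1 x t ht))
    (hasDerivAt_xDeriv h.2.1 (mk_mem_halfPlane ht))).deriv

theorem fderiv_riemannInvariant (h : PSysSol K₁ γ (Ici 0) 1 τ u) (hγ : 1 < γ) (σ : ℝ) {p : ℝ × ℝ}
    (hp : 0 < p.2) :
    fderiv ℝ (riemannInvariant K₁ γ σ τ u) p = fderiv ℝ (fun p => u p.1 p.2) p +
      σ • -soundP K₁ γ (τ p.1 p.2) • fderiv ℝ (fun p => τ p.1 p.2) p :=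
  ((hasStrictFDerivAt_of_pos h.2.2.1 hp).hasFDerivAt.add
    ((HasDerivAt.comp_hasFDerivAt (h₂ := etaP K₁ γ) p (hasDerivAt_etaP hγ (h.1 p.1 p.2 hp.le))
      (hasStrictFDerivAt_of_pos h.2.1 hp).hasFDerivAt).const_mul σ)).fderiv

theorem isTransported_riemannInvariant (h : PSysSol K₁ γ (Ici 0) 1 τ u) (hK₁γ : 0 ≤ K₁ * γ)
    (hγ : 1 < γ) {σ : ℝ} (hσ : σ ^ 2 = 1) :
    IsTransported (fun p => σ * soundP K₁ γ (τ p.1 p.2)) (riemannInvariant K₁ γ σ τ u) := by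
  rintro ⟨x, t⟩ ht
  have ⟨_, hτ, hu, hmass, hmomentum⟩ := h
  have hu_x : deriv (fun x => u x t) x = fderiv ℝ (fun p : ℝ × ℝ => u p.1 p.2) (x, t) (1, 0) :=
    xDeriv_eq_fderiv hu ht
  have hmass' := hmass x t ht.le
  have hmomentum' := hmomentum x t ht.le
  rw [deriv_time_eq_fderiv hτ ht, hu_x] at hmass'
  rw [deriv_time_eq_fderiv hu ht, h.deriv_pressure hK₁γ ht.le, xDeriv_eq_fderiv hτ ht]
    at hmomentum'
  have hdirection : ((σ * soundP K₁ γ (τ x t), 1) : ℝ × ℝ) =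
      (σ * soundP K₁ γ (τ x t)) • (1, 0) + (0, 1) := by
    ext <;> simp
  rw [h.fderiv_riemannInvariant hγ σ ht, hdirection]
  simp only [map_add, map_smul, add_apply, smul_apply, smul_eq_mul]
  linear_combination hmomentum' - σ * soundP K₁ γ (τ x t) * hmass' -
    soundP K₁ γ (τ x t) ^ 2 * fderiv ℝ (fun p : ℝ × ℝ => τ p.1 p.2) (x, t) (1, 0) * hσ

theorem waveSpeed_riemannInvariant (h : PSysSol K₁ γ (Ici 0) 1 τ u) (hK₁ : 0 < K₁) (hγ : 1 < γ)
    {p : ℝ × ℝ} (hp : 0 ≤ p.2) :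
    waveSpeed (gammaLawSpeed K₁ γ) (riemannInvariant K₁ γ 1 τ u)
      (riemannInvariant K₁ γ (-1) τ u) p = soundP K₁ γ (τ p.1 p.2) := by
  rw [← gammaLawSpeed_two_mul_etaP hK₁ hγ (h.1 p.1 p.2 hp), waveSpeed, riemannInvariant,
    riemannInvariant]
  ring_nf

theorem diagonalSolution (h : PSysSol K₁ γ (Ici 0) 1 τ u) (hK₁ : 0 < K₁) (hγ : 1 < γ) :
    DiagonalSolution (gammaLawSpeed K₁ γ) (riemannInvariant K₁ γ 1 τ u)
      (riemannInvariant K₁ γ (-1) τ u) where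
  contDiffOn_s := h.contDiffOn_riemannInvariant 1
  contDiffOn_r := h.contDiffOn_riemannInvariant (-1)
  lt p hp := by
    have := etaP_pos hK₁ hγ (h.1 p.1 p.2 hp.2)
    unfold riemannInvariant
    linarith
  isTransported_s p hp := by
    simpa only [one_mul, h.waveSpeed_riemannInvariant hK₁ hγ hp.le] using
      h.isTransported_riemannInvariant (by positivity) hγ (one_pow 2) p hp
  isTransported_r p hp := by
    simpa only [neg_one_mul, Pi.neg_apply, h.waveSpeed_riemannInvariant hK₁ hγ hp.le] using
      h.isTransported_riemannInvariant (by positivity) hγ neg_one_sq p hp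

end PSysSol

theorem AssumptionA.abs_velocity_le {M₁ M₂ : ℝ} {τ₀ u₀ : ℝ → ℝ} (hA : AssumptionA M₁ M₂ τ₀ u₀)
    (x : ℝ) : |u₀ x| ≤ M₁ := by
  linarith [hA.2.2.2.2.1 x, abs_nonneg (τ₀ x), abs_nonneg (deriv τ₀ x), abs_nonneg (deriv u₀ x)]

theorem psystem_blowup_gamma_ge_three_general {K₁ γ M m : ℝ} (hK₁ : 0 < K₁) (hγ : 3 ≤ γ)
    (hm : 0 < m) {τ₀ u₀ : ℝ → ℝ} (hτ₀ : ∀ x, m ≤ τ₀ x) (hu₀ : ∀ x, |u₀ x| ≤ M)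
    (hcomp : ∃ xstar : ℝ,
      deriv (fun x => u₀ x + etaP K₁ γ (τ₀ x)) xstar < 0 ∨
      deriv (fun x => u₀ x - etaP K₁ γ (τ₀ x)) xstar < 0) :
    ¬ ∃ τ u : ℝ → ℝ → ℝ,
        PSysSol K₁ γ (Ici 0) 1 τ u ∧ (∀ x, τ x 0 = τ₀ x) ∧ (∀ x, u x 0 = u₀ x) := by
  rintro ⟨τ, u, h, hτ, hu⟩
  have hγ₁ : 1 < γ := by linarith
  have hκ := isRiccatiSpeed_gammaLawSpeed hK₁ hγ
  have hη : ∀ x, etaP K₁ γ (τ₀ x) ≤ etaP K₁ γ m := fun x => etaP_le_etaP hγ₁ hm (hτ₀ x)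
  have hS : ∀ x, riemannInvariant K₁ γ 1 τ u (x, 0) ≤ M + etaP K₁ γ m := fun x => by
    simp only [riemannInvariant, hτ, hu]
    linarith [le_of_abs_le (hu₀ x), hη x]
  have hR : ∀ x, -M - etaP K₁ γ m ≤ riemannInvariant K₁ γ (-1) τ u (x, 0) := fun x => by
    simp only [riemannInvariant, hτ, hu]
    linarith [neg_le_of_abs_le (hu₀ x), hη x]
  obtain ⟨x, hs | hr⟩ := hcomp
  · have := (h.diagonalSolution hK₁ hγ₁).xDeriv_s_nonneg hκ hS hR x
    simp only [xDeriv, riemannInvariant, hτ, hu, one_mul] at this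
    exact this.not_gt hs
  · have := (h.diagonalSolution hK₁ hγ₁).xDeriv_r_nonneg hκ hS hR x
    simp only [xDeriv, riemannInvariant, hτ, hu, neg_one_mul, ← sub_eq_add_neg] at this
    exact this.not_gt hr

/-- Proposition 2.1 (Lax, adapted): for `γ ≥ 3` and initial data satisfying Assumption A,
if the initial data are compressive at some point (`s_x(x*,0) < 0` or `r_x(x*,0) < 0`),
then there is no global-in-time `C¹` solution of the p-system on `ℝ × [0,∞)`. -/
theorem psystem_blowup_gamma_ge_three
    (K₁ γ M₁ M₂ : ℝ) (hK₁ : 0 < K₁) (hγ : 3 ≤ γ)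
    (τ₀ u₀ : ℝ → ℝ) (hA : AssumptionA M₁ M₂ τ₀ u₀)
    (hcomp : ∃ xstar : ℝ,
      deriv (fun x => u₀ x + etaP K₁ γ (τ₀ x)) xstar < 0 ∨
      deriv (fun x => u₀ x - etaP K₁ γ (τ₀ x)) xstar < 0) :
    ¬ ∃ τ u : ℝ → ℝ → ℝ,
        PSysSol K₁ γ (Set.Ici 0) 1 τ u ∧ (∀ x, τ x 0 = τ₀ x) ∧ (∀ x, u x 0 = u₀ x) := by
  have ⟨_, _, _, hM₂, _, hτ₀⟩ := hA
  exact psystem_blowup_gamma_ge_three_general hK₁ hγ hM₂ hτ₀ hA.abs_velocity_le hcomp
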